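/- arXiv:1603.08590 — 2 statements merged into one kernel-verified Lean document; each statement's English description precedes it below -/
import Mathlib

section
/- For every n ≥ 1, the free proto-unital shelf FPUS(n) has exactly n! right zeros; that is, the set { r ∈ FPUS(n) : x*r = r for all x ∈ FPUS(n) } has cardinality n!. -/
/-- The defining relations of a proto-unital shelf on the free semigroup on `n`
generators: self-distributivity `(x*y)*z ~ (x*z)*(y*z)`, and the identities
`x*y ~ y*(x*y)` and `x*y ~ (x*y)*y`. -/
def pusRel (n : ℕ) : FreeSemigroup (Fin n) → FreeSemigroup (Fin n) → Prop :=
  fun a b =>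
    (∃ x y z : FreeSemigroup (Fin n), a = (x * y) * z ∧ b = (x * z) * (y * z)) ∨
    (∃ x y : FreeSemigroup (Fin n), a = x * y ∧ b = y * (x * y)) ∨
    (∃ x y : FreeSemigroup (Fin n), a = x * y ∧ b = (x * y) * y)

/-- The free proto-unital shelf on `n` generators. -/
def FPUS (n : ℕ) : Type := (conGen (pusRel n)).Quotient

instance (n : ℕ) : Mul (FPUS n) :=
  inferInstanceAs (Mul (conGen (pusRel n)).Quotient)

/-!
For a word `w`, list the letters of `w` in the order of their last occurrences. This list is an
invariant of the class of `w` in `FPUS n`: under it, multiplication becomes `∪` on lists, which is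
itself a proto-unital shelf. Conversely, left multiplication by `w` depends only on this list, as
`x * (y * (x * z)) = y * (x * z)` lets all but the last occurrence of a letter be dropped. An
idempotent also absorbs its last letter `a` on the right, so it is obtained by letting its list
act on `a`; hence idempotents, and in particular right zeros, are determined by their lists. The
lists of right zeros are exactly the orderings of the `n` generators.
-/

/-- The action of the word `l` on `s` by left multiplication: `f a₁ * (f a₂ * (⋯ * s))` for
`l = [a₁, a₂, …]`. -/
def wordMul {α S : Type*} [Mul S] (f : α → S) (l : List α) (s : S) : S :=
  l.foldr (fun a t => f a * t) s

theorem wordMul_cons {α S : Type*} [Mul S] (f : α → S) (a : α) (l : List α) (s : S) :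
    wordMul f (a :: l) s = f a * wordMul f l s := rfl

/-- A proto-unital shelf with associative multiplication. Self-distributivity is derived from the
first law in `IsProtoUnitalShelf.mul_right_distrib`, so it is not a field. -/
class IsProtoUnitalShelf (S : Type*) [Semigroup S] : Prop where
  right_mul_mul (x y : S) : y * (x * y) = x * y
  mul_mul_right (x y : S) : x * y * y = x * y

namespace IsProtoUnitalShelf

variable {α S : Type*} [Semigroup S] [IsProtoUnitalShelf S]

theorem mul_right_distrib (x y z : S) : x * y * z = x * z * (y * z) := by
  simp only [mul_assoc, right_mul_mul]

theorem isIdempotentElem_mul (x y : S) : IsIdempotentElem (x * y) :=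
  calc x * y * (x * y) = x * y * (y * (x * y)) := by rw [right_mul_mul x y]
    _ = y * (x * y) := right_mul_mul y (x * y)
    _ = x * y := right_mul_mul x y

theorem left_mul_mul (x y : S) : x * (x * y) = x * y :=
  calc x * (x * y) = x * y * (x * y) := by rw [mul_assoc, right_mul_mul]
    _ = x * y := isIdempotentElem_mul x y

theorem mul_mul_mul_left (x y z : S) : x * (y * (x * z)) = y * (x * z) :=
  calc x * (y * (x * z)) = x * (x * z * (y * (x * z))) := by rw [right_mul_mul]
    _ = x * z * (y * (x * z)) := by rw [← mul_assoc x (x * z), left_mul_mul]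
    _ = y * (x * z) := right_mul_mul y (x * z)

theorem mul_wordMul_of_mem (f : α → S) {a : α} {l : List α} (ha : a ∈ l) (s : S) :
    f a * wordMul f l s = wordMul f l s := by
  induction l with
  | nil => exact absurd ha List.not_mem_nil
  | cons b l ih =>
    rw [wordMul_cons]
    obtain rfl | ha := List.mem_cons.1 ha
    · exact left_mul_mul _ _
    · rw [← ih ha]
      exact mul_mul_mul_left _ _ _

variable [DecidableEq α]

theorem wordMul_insert (f : α → S) (a : α) (l : List α) (s : S) :
    wordMul f (l.insert a) s = f a * wordMul f l s := by
  by_cases ha : a ∈ l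
  · rw [List.insert_of_mem ha, mul_wordMul_of_mem f ha]
  · rw [List.insert_of_not_mem ha, wordMul_cons]

theorem wordMul_union (f : α → S) (l m : List α) (s : S) :
    wordMul f (l ∪ m) s = wordMul f l (wordMul f m s) := by
  induction l with
  | nil => rfl
  | cons a l ih => rw [List.cons_union, wordMul_insert, ih, wordMul_cons]

end IsProtoUnitalShelf

/-- Lists as a proto-unital shelf under `∪`. On duplicate-free lists, `l ∪ m` keeps the last
occurrence of each entry of `l ++ m`. -/
def UnionList (α : Type*) : Type _ := List α

namespace UnionList

variable {α : Type*} [DecidableEq α]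

theorem insert_union (a : α) (l m : List α) : l.insert a ∪ m = (l ∪ m).insert a := by
  by_cases ha : a ∈ l
  · rw [List.insert_of_mem ha, List.insert_of_mem (List.mem_union_left ha m)]
  · rw [List.insert_of_not_mem ha, List.cons_union]

theorem union_assoc (l m k : List α) : l ∪ m ∪ k = l ∪ (m ∪ k) := by
  induction l with
  | nil => rfl
  | cons a l ih => simp only [List.cons_union, insert_union, ih]

theorem union_union_right (l m : List α) : l ∪ m ∪ m = l ∪ m := by
  rw [union_assoc, (List.Subset.refl m).union_eq_right]

theorem union_eq_left_of_suffix {l m : List α} (hl : l.Nodup) (h : m <:+ l) : l ∪ m = l := by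
  obtain ⟨k, rfl⟩ := h
  obtain ⟨hk, -, hkm⟩ := List.nodup_append'.1 hl
  have h : k ∪ m = k ++ m := by rw [hkm.union_eq, hk.dedup]
  rw [← h, union_union_right]

instance : Semigroup (UnionList α) where
  mul l m := (l ∪ m : List α)
  mul_assoc := union_assoc

instance : IsProtoUnitalShelf (UnionList α) where
  right_mul_mul l m := List.Subset.union_eq_right (List.suffix_union_right l m).subset
  mul_mul_right := union_union_right

end UnionList

namespace FPUS

open IsProtoUnitalShelf

variable {n : ℕ}

theorem sound {u v : FreeSemigroup (Fin n)} (h : pusRel n u v) :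
    (u : (conGen (pusRel n)).Quotient) = v :=
  (Con.eq _).2 (ConGen.Rel.of _ _ h)

instance : Semigroup (FPUS n) where
  mul_assoc := mul_assoc (G := (conGen (pusRel n)).Quotient)

instance : IsProtoUnitalShelf (FPUS n) where
  right_mul_mul x y := Con.induction_on₂ x y fun u v => (sound (.inr (.inl ⟨u, v, rfl, rfl⟩))).symm
  mul_mul_right x y := Con.induction_on₂ x y fun u v => (sound (.inr (.inr ⟨u, v, rfl, rfl⟩))).symm

/-- The `a`-th free generator. -/
def of (a : Fin n) : FPUS n := (FreeSemigroup.of a : (conGen (pusRel n)).Quotient)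

theorem induction_on {p : FPUS n → Prop} (x : FPUS n) (of : ∀ a, p (of a))
    (mul : ∀ x y, p x → p y → p (x * y)) : p x :=
  Con.induction_on x fun w =>
    FreeSemigroup.recOnMul w of fun _ _ ha hw => mul _ _ ha hw

section Lift

variable {S : Type*} [Semigroup S] [IsProtoUnitalShelf S]

theorem conGen_le_ker (φ : FreeSemigroup (Fin n) →ₙ* S) : conGen (pusRel n) ≤ Con.ker φ := by
  refine Con.conGen_le.2 ?_
  rintro _ _ (⟨x, y, z, rfl, rfl⟩ | ⟨x, y, rfl, rfl⟩ | ⟨x, y, rfl, rfl⟩) <;>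
    simp only [Con.ker_rel, map_mul]
  · exact mul_right_distrib _ _ _
  · exact (right_mul_mul _ _).symm
  · exact (mul_mul_right _ _).symm

/-- The universal property of the free proto-unital shelf: extension of `f` to a homomorphism. -/
def lift (f : Fin n → S) : FPUS n →ₙ* S where
  toFun x := Con.liftOn x (FreeSemigroup.lift f) fun _ _ h => conGen_le_ker _ h
  map_mul' x y := Con.induction_on₂ x y (map_mul (FreeSemigroup.lift f))

end Lift

/-- The generators occurring in a word for `x`, in the order of their last occurrences. -/
def lastOccurrences (x : FPUS n) : List (Fin n) :=
  lift (S := UnionList (Fin n)) (fun a => [a]) x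

theorem lastOccurrences_of (a : Fin n) : lastOccurrences (of a) = [a] := rfl

theorem lastOccurrences_mul (x y : FPUS n) :
    lastOccurrences (x * y) = lastOccurrences x ∪ lastOccurrences y :=
  map_mul (lift (S := UnionList (Fin n)) fun a => [a]) x y

theorem nodup_lastOccurrences (x : FPUS n) : (lastOccurrences x).Nodup := by
  induction x using induction_on with
  | of a => exact List.nodup_singleton a
  | mul x y _ hy => rw [lastOccurrences_mul]; exact hy.union _

theorem lastOccurrences_ne_nil (x : FPUS n) : lastOccurrences x ≠ [] := by
  induction x using induction_on with
  | of a => exact List.cons_ne_nil a []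
  | mul x y _ hy => rw [lastOccurrences_mul]; exact (List.suffix_union_right _ _).ne_nil hy

theorem lastOccurrences_wordMul_of (l : List (Fin n)) (x : FPUS n) :
    lastOccurrences (wordMul of l x) = l ∪ lastOccurrences x := by
  induction l with
  | nil => rfl
  | cons a l ih =>
    rw [wordMul_cons, lastOccurrences_mul, ih, lastOccurrences_of, List.cons_union,
      List.cons_union, List.nil_union]

theorem mul_eq_wordMul_lastOccurrences (x y : FPUS n) :
    x * y = wordMul of (lastOccurrences x) y := by
  induction x using induction_on generalizing y with
  | of a => rfl
  | mul x₁ x₂ h₁ h₂ => rw [lastOccurrences_mul, wordMul_union, ← h₂, ← h₁, mul_assoc]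

theorem mul_mul_of_eq_mul {x : FPUS n} {a : Fin n} (ha : [a] <:+ lastOccurrences x) (y : FPUS n) :
    y * x * of a = y * x := by
  induction x using induction_on generalizing y with
  | of b =>
    obtain rfl : a = b := List.singleton_inj.1 (ha.eq_of_length rfl)
    exact mul_mul_right _ _
  | mul x₁ x₂ _ ih =>
    rw [lastOccurrences_mul] at ha
    have ha₂ : [a] <:+ lastOccurrences x₂ :=
      List.suffix_of_suffix_length_le ha (List.suffix_union_right _ _)
        (List.length_pos_of_ne_nil (lastOccurrences_ne_nil x₂))
    rw [← mul_assoc, ih ha₂]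

theorem eq_wordMul_of_isIdempotentElem {x : FPUS n} (hx : IsIdempotentElem x) {a : Fin n}
    (ha : [a] <:+ lastOccurrences x) : x = wordMul of (lastOccurrences x) (of a) :=
  calc x = x * x * of a := by rw [mul_mul_of_eq_mul ha, hx.eq]
    _ = x * of a := by rw [hx.eq]
    _ = wordMul of (lastOccurrences x) (of a) := mul_eq_wordMul_lastOccurrences x (of a)

theorem injOn_lastOccurrences_isIdempotentElem :
    Set.InjOn lastOccurrences {x : FPUS n | IsIdempotentElem x} := by
  intro x hx y hy hxy
  obtain ⟨l, a, hl⟩ :=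
    (List.eq_nil_or_concat' (lastOccurrences x)).resolve_left (lastOccurrences_ne_nil x)
  have ha : [a] <:+ lastOccurrences x := ⟨l, hl.symm⟩
  rw [eq_wordMul_of_isIdempotentElem hx ha, eq_wordMul_of_isIdempotentElem hy (hxy ▸ ha), hxy]

theorem mul_wordMul_of_subset {x : FPUS n} {l : List (Fin n)} (h : lastOccurrences x ⊆ l)
    (y : FPUS n) : x * wordMul of l y = wordMul of l y := by
  rw [mul_eq_wordMul_lastOccurrences, ← wordMul_union, h.union_eq_right]

theorem mem_lastOccurrences_of_rightZero {r : FPUS n} (hr : ∀ x, x * r = r) (a : Fin n) :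
    a ∈ lastOccurrences r := by
  rw [← hr (of a), lastOccurrences_mul, lastOccurrences_of]
  exact List.mem_union_left (List.mem_singleton_self a) _

theorem exists_rightZero_lastOccurrences_eq {l : List (Fin n)} (hl : l ≠ []) (hnodup : l.Nodup)
    (hmem : ∀ a, a ∈ l) : ∃ r : FPUS n, (∀ x, x * r = r) ∧ lastOccurrences r = l := by
  obtain ⟨k, a, rfl⟩ := (List.eq_nil_or_concat' l).resolve_left hl
  refine ⟨wordMul of (k ++ [a]) (of a), fun x => mul_wordMul_of_subset (fun b _ => hmem b) _, ?_⟩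
  rw [lastOccurrences_wordMul_of, lastOccurrences_of]
  exact UnionList.union_eq_left_of_suffix hnodup (List.suffix_append k [a])

theorem bijOn_lastOccurrences_rightZeros (hn : 1 ≤ n) :
    Set.BijOn lastOccurrences {r : FPUS n | ∀ x, x * r = r} {l | l.Perm (List.finRange n)} := by
  refine ⟨fun r hr => ?_, injOn_lastOccurrences_isIdempotentElem.mono fun r hr => hr r,
    fun l hl => ?_⟩
  · refine (List.perm_ext_iff_of_nodup (nodup_lastOccurrences r) (List.nodup_finRange n)).2 ?_
    exact fun a => iff_of_true (mem_lastOccurrences_of_rightZero hr a) (List.mem_finRange a)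
  · have hmem (a : Fin n) : a ∈ l := hl.mem_iff.2 (List.mem_finRange a)
    exact exists_rightZero_lastOccurrences_eq (List.ne_nil_of_mem (hmem ⟨0, hn⟩))
      (hl.nodup_iff.2 (List.nodup_finRange n)) hmem

end FPUS

theorem ncard_setOf_perm {α : Type*} {l : List α} (hl : l.Nodup) :
    {m : List α | m.Perm l}.ncard = l.length.factorial := by
  classical
  have h : {m : List α | m.Perm l} = l.permutations.toFinset := by
    ext m
    simp only [Set.mem_ofPred_eq, List.coe_toFinset, List.mem_permutations]
  rw [h, Set.ncard_coe_finset, List.toFinset_card_of_nodup (List.nodup_permutations l hl),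
    List.length_permutations]

/-- For `n ≥ 1`, the free proto-unital shelf `FPUS(n)` has exactly
`n!` right zeros, i.e. elements `r` with `x * r = r` for all `x`. -/
theorem FPUS_card_right_zeros (n : ℕ) (hn : 1 ≤ n) :
    Nat.card {r : FPUS n // ∀ x : FPUS n, x * r = r} = n.factorial := by
  rw [← Set.coe_ofPred, Nat.card_coe_set_eq, (FPUS.bijOn_lastOccurrences_rightZeros hn).ncard_eq,
    ncard_setOf_perm (List.nodup_finRange n), List.length_finRange]
end

section
/- Let (X,*) be a shelf possessing a right fixed element, i.e. there exist r, c ∈ X with x*r = c for all x ∈ X. For n ≥ 0 let C_n be the free abelian group on X^{n+1}, and let the two-term (rack) boundary ∂_n : C_n → C_{n-1} (n ≥ 1) be the ℤ-linear map sending a generator (x_0,…,x_n) to Σ_{i=1}^n (−1)^i [ (x_0,…,x_{i-1},x_{i+1},…,x_n) − (x_0*x_i, x_1*x_i, …, x_{i-1}*x_i, x_{i+1},…,x_n) ], with ∂_0 := 0. Then for every n ≥ 0, the image of ∂_{n+1} is contained in the kernel of ∂_n, and the quotient group ker(∂_n)/im(∂_{n+1}) — the n-th two-term (rack) homology group H_n^R(X)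 — is isomorphic to ℤ. -/
/-!
Appending a coordinate `y` to every chain is a homotopy, up to sign, between the identity and the
operator `R_y` of coordinatewise right multiplication by `y`. Self-distributivity says that `R_y`
commutes with `∂`, so applying `∂` to the homotopy relation gives `∂ ∘ ∂ = 0` by induction on the
degree. If `x * r = c` for all `x`, then `R_r` sends a chain to its augmentation times the constant
tuple `(c, …, c)`, so every cycle is homologous to a multiple of that tuple; the tuple is a cycle
because `c * c = c`, and the augmentation, which vanishes on boundaries, detects the multiple.
-/

namespace RackHomology

variable {X : Type*}

/-- The chain module `C_n`: the free abelian group (as a `ℤ`-module) on the set of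
`(n+1)`-tuples of elements of `X`. -/
abbrev C (X : Type*) (n : ℕ) : Type _ := (Fin (n + 1) → X) →₀ ℤ

/-- The `i`-th face map for the trivial operation: delete the `i`-th coordinate. -/
def dTriv {n : ℕ} (i : Fin (n + 2)) (x : Fin (n + 2) → X) : Fin (n + 1) → X :=
  fun j => x (i.succAbove j)

/-- The `i`-th face map for the operation `op`: delete the `i`-th coordinate and
act by `x_i` on the right on all earlier coordinates. -/
def dOp (op : X → X → X) {n : ℕ} (i : Fin (n + 2)) (x : Fin (n + 2) → X) :
    Fin (n + 1) → X :=
  fun j => if (j : ℕ) < (i : ℕ) then op (x (Fin.castSucc j)) (x i) else x (i.succAbove j)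

/-- The two-term (rack) boundary map `∂_{n+1} : C_{n+1} → C_n`, sending a generator
`(x_0, …, x_{n+1})` to
`Σ_{i=1}^{n+1} (−1)^i [(x_0,…,x̂_i,…,x_{n+1}) − (x_0*x_i,…,x_{i-1}*x_i,x_{i+1},…,x_{n+1})]`.
(The boundary `∂_0 : C_0 → 0` is the zero map, so `ker ∂_0 = C_0`.) -/
noncomputable def rackBoundary (op : X → X → X) (n : ℕ) :
    C X (n + 1) →ₗ[ℤ] C X n :=
  Finsupp.lift (C X n) ℤ (Fin (n + 2) → X) fun x =>
    ∑ i ∈ Finset.univ.filter (fun i : Fin (n + 2) => i ≠ 0),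
      ((-1 : ℤ) ^ (i : ℕ)) •
        (Finsupp.single (dTriv i x) 1 - Finsupp.single (dOp op i x) 1)

theorem nonempty_quotient_comap_subtype_equiv {R M N : Type*} [Ring R] [AddCommGroup M]
    [Module R M] [AddCommGroup N] [Module R N] {f : M →ₗ[R] N} {K L : Submodule R M}
    (hL : L = K ⊓ LinearMap.ker f) (hf : Function.Surjective (f.domRestrict K)) :
    Nonempty ((K ⧸ L.comap K.subtype) ≃ₗ[R] N) := by
  have hker : L.comap K.subtype = LinearMap.ker (f.domRestrict K) := by
    rw [hL, Submodule.comap_inf, Submodule.comap_subtype_self, top_inf_eq,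
      LinearMap.ker_domRestrict]
  exact ⟨Submodule.quotEquivOfEq _ _ hker ≪≫ₗ (f.domRestrict K).quotKerEquivOfSurjective hf⟩

/-- The contribution `x ↦ dTriv i x - dOp op i x` of the `i`-th coordinate to the rack boundary,
extended linearly to chains. As it vanishes for `i = 0`, sums over `i` need not omit that index. -/
noncomputable def faceDiff (op : X → X → X) {n : ℕ} (i : Fin (n + 2)) : C X (n + 1) →ₗ[ℤ] C X n :=
  Finsupp.lmapDomain ℤ ℤ (dTriv i) - Finsupp.lmapDomain ℤ ℤ (dOp op i)

/-- The operator `R_y` on chains that multiplies every coordinate by `y` on the right. For a shelf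
it commutes with the rack boundary. -/
noncomputable def rightMul (op : X → X → X) (n : ℕ) (y : X) : C X n →ₗ[ℤ] C X n :=
  Finsupp.lmapDomain ℤ ℤ fun x j => op (x j) y

/-- The operator `(x_0, …, x_n) ↦ (x_0, …, x_n, y)` on chains, a homotopy (up to sign) between the
identity and `R_y`. -/
noncomputable def snocChain (n : ℕ) (y : X) : C X n →ₗ[ℤ] C X (n + 1) :=
  Finsupp.lmapDomain ℤ ℤ fun x => (Fin.snoc x y : Fin (n + 2) → X)

/-- The augmentation, i.e. the sum of the coefficients of a chain; it induces the isomorphism of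
each homology group with `ℤ`. -/
noncomputable def augmentation (X : Type*) (n : ℕ) : C X n →ₗ[ℤ] ℤ :=
  Finsupp.linearCombination ℤ fun _ => 1

theorem augmentation_single (n : ℕ) (x : Fin (n + 1) → X) (a : ℤ) :
    augmentation X n (Finsupp.single x a) = a := by
  simp [augmentation]

section Faces

variable (op : X → X → X) {n : ℕ}

theorem dOp_zero (x : Fin (n + 2) → X) : dOp op 0 x = dTriv 0 x := by
  ext j
  simp [dOp, dTriv]

theorem dTriv_last_snoc (x : Fin (n + 1) → X) (y : X) :
    dTriv (Fin.last (n + 1)) (Fin.snoc x y : Fin (n + 2) → X) = x := by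
  ext j
  simp [dTriv]

theorem dOp_last_snoc (x : Fin (n + 1) → X) (y : X) :
    dOp op (Fin.last (n + 1)) (Fin.snoc x y : Fin (n + 2) → X) = fun j => op (x j) y := by
  ext j
  simp [dOp, j.isLt]

theorem dTriv_castSucc_snoc (i : Fin (n + 2)) (x : Fin (n + 2) → X) (y : X) :
    dTriv i.castSucc (Fin.snoc x y : Fin (n + 3) → X) =
      (Fin.snoc (dTriv i x) y : Fin (n + 2) → X) := by
  ext j
  cases j using Fin.lastCases <;> simp [dTriv]

theorem dOp_castSucc_snoc (i : Fin (n + 2)) (x : Fin (n + 2) → X) (y : X) :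
    dOp op i.castSucc (Fin.snoc x y : Fin (n + 3) → X) =
      (Fin.snoc (dOp op i x) y : Fin (n + 2) → X) := by
  ext j
  cases j using Fin.lastCases with
  | last => simp [dOp, i.is_le]
  | cast j => simp [dOp]

theorem dTriv_op_right (i : Fin (n + 2)) (x : Fin (n + 2) → X) (y : X) :
    dTriv i (fun j => op (x j) y) = fun j => op (dTriv i x j) y :=
  rfl

variable {op} in
theorem dOp_op_right (sd : ∀ a b c : X, op (op a b) c = op (op a c) (op b c))
    (i : Fin (n + 2)) (x : Fin (n + 2) → X) (y : X) :
    dOp op i (fun j => op (x j) y) = fun j => op (dOp op i x j) y := by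
  ext j
  simp only [dOp, ← sd, ← apply_ite (op · y)]

theorem dTriv_const (c : X) (i : Fin (n + 2)) : dTriv i (fun _ => c) = fun _ => c :=
  rfl

variable {op} in
theorem dOp_const {c : X} (hc : op c c = c) (i : Fin (n + 2)) :
    dOp op i (fun _ => c) = fun _ => c := by
  ext j
  simp [dOp, hc]

end Faces

section FaceDiff

variable (op : X → X → X) {n : ℕ}

theorem faceDiff_zero : faceDiff op (0 : Fin (n + 2)) = 0 := by
  simp [faceDiff, funext (dOp_zero op)]

theorem faceDiff_last_snocChain (y : X) (z : C X n) :
    faceDiff op (Fin.last (n + 1)) (snocChain n y z) = z - rightMul op n y z := by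
  have mapDomain_self : Finsupp.mapDomain (fun x => x) z = z := Finsupp.mapDomain_id
  simp [faceDiff, snocChain, rightMul, ← Finsupp.mapDomain_comp, Function.comp_def,
    dTriv_last_snoc, dOp_last_snoc, mapDomain_self]

theorem faceDiff_castSucc_snocChain (i : Fin (n + 2)) (y : X) (z : C X (n + 1)) :
    faceDiff op i.castSucc (snocChain (n + 1) y z) = snocChain n y (faceDiff op i z) := by
  simp [faceDiff, snocChain, Finsupp.mapDomain_sub, ← Finsupp.mapDomain_comp, Function.comp_def,
    dTriv_castSucc_snoc, dOp_castSucc_snoc]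

variable {op} in
theorem faceDiff_rightMul (sd : ∀ a b c : X, op (op a b) c = op (op a c) (op b c))
    (i : Fin (n + 2)) (y : X) (z : C X (n + 1)) :
    faceDiff op i (rightMul op (n + 1) y z) = rightMul op n y (faceDiff op i z) := by
  simp [faceDiff, rightMul, Finsupp.mapDomain_sub, ← Finsupp.mapDomain_comp, Function.comp_def,
    dTriv_op_right, dOp_op_right sd]

theorem augmentation_faceDiff (i : Fin (n + 2)) (z : C X (n + 1)) :
    augmentation X n (faceDiff op i z) = 0 := by
  simp [faceDiff, augmentation, Finsupp.linearCombination_mapDomain, Function.comp_def]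

variable {op} in
theorem faceDiff_single_const {c : X} (hc : op c c = c) (i : Fin (n + 2)) :
    faceDiff op i (Finsupp.single (fun _ => c) 1) = 0 := by
  simp [faceDiff, dTriv_const, dOp_const hc]

end FaceDiff

section Boundary

variable (op : X → X → X) (n : ℕ)

theorem rackBoundary_apply (z : C X (n + 1)) :
    rackBoundary op n z = ∑ i : Fin (n + 2), (-1 : ℤ) ^ (i : ℕ) • faceDiff op i z := by
  suffices rackBoundary op n = ∑ i : Fin (n + 2), (-1 : ℤ) ^ (i : ℕ) • faceDiff op i by
    simp [this]
  have drop_zero : ∑ i : Fin (n + 2) with i ≠ 0, (-1 : ℤ) ^ (i : ℕ) • faceDiff op i =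
      ∑ i : Fin (n + 2), (-1 : ℤ) ^ (i : ℕ) • faceDiff op i := by
    refine Finset.sum_filter_of_ne fun i _ hi => ?_
    rintro rfl
    simp [faceDiff_zero] at hi
  rw [← drop_zero]
  ext x : 2
  simp [rackBoundary, faceDiff]

theorem rackBoundary_zero_snocChain (y : X) (z : C X 0) :
    rackBoundary op 0 (snocChain 0 y z) = rightMul op 0 y z - z := by
  rw [rackBoundary_apply, Fin.sum_univ_castSucc, faceDiff_last_snocChain]
  simp [faceDiff_zero]

theorem rackBoundary_succ_snocChain (y : X) (z : C X (n + 1)) :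
    rackBoundary op (n + 1) (snocChain (n + 1) y z) =
      snocChain n y (rackBoundary op n z) + (-1 : ℤ) ^ n • (z - rightMul op (n + 1) y z) := by
  simp only [rackBoundary_apply, Fin.sum_univ_castSucc (n := n + 2), map_sum, map_smul,
    faceDiff_castSucc_snocChain, faceDiff_last_snocChain, Fin.val_castSucc, Fin.val_last,
    pow_add, neg_one_sq, mul_one]

variable {op} in
theorem rackBoundary_rightMul (sd : ∀ a b c : X, op (op a b) c = op (op a c) (op b c))
    (y : X) (z : C X (n + 1)) :
    rackBoundary op n (rightMul op (n + 1) y z) = rightMul op n y (rackBoundary op n z) := by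
  simp only [rackBoundary_apply, map_sum, map_smul, faceDiff_rightMul sd]

theorem augmentation_comp_rackBoundary : augmentation X n ∘ₗ rackBoundary op n = 0 :=
  LinearMap.ext fun z => by simp [rackBoundary_apply, augmentation_faceDiff]

variable {op} in
theorem rackBoundary_single_const {c : X} (hc : op c c = c) :
    rackBoundary op n (Finsupp.single (fun _ => c) 1) = 0 := by
  simp [rackBoundary_apply, faceDiff_single_const hc]

variable {n} in
theorem hom_ext_snocChain {M : Type*} [AddCommMonoid M] [Module ℤ M] {f g : C X (n + 1) →ₗ[ℤ] M}
    (h : ∀ y z, f (snocChain n y z) = g (snocChain n y z)) : f = g := by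
  ext x : 2
  simpa [snocChain] using h (x (Fin.last (n + 1))) (Finsupp.single (Fin.init x) 1)

variable {op} in
theorem rackBoundary_comp_rackBoundary
    (sd : ∀ a b c : X, op (op a b) c = op (op a c) (op b c)) :
    rackBoundary op n ∘ₗ rackBoundary op (n + 1) = 0 := by
  induction n with
  | zero =>
    refine hom_ext_snocChain fun y z => ?_
    simp [rackBoundary_succ_snocChain, rackBoundary_zero_snocChain, rackBoundary_rightMul 0 sd]
  | succ n ih =>
    have boundary_sq (z : C X (n + 2)) : rackBoundary op n (rackBoundary op (n + 1) z) = 0 :=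
      LinearMap.congr_fun ih z
    refine hom_ext_snocChain fun y z => ?_
    simp [rackBoundary_succ_snocChain, rackBoundary_rightMul (n + 1) sd, boundary_sq, pow_succ]

end Boundary

section RightFixed

variable {op : X → X → X} {r c : X}

theorem op_self_of_right_fixed (sd : ∀ a b c : X, op (op a b) c = op (op a c) (op b c))
    (hr : ∀ x, op x r = c) : op c c = c := by
  simpa only [hr] using (sd r r r).symm

theorem rightMul_apply_of_right_fixed (hr : ∀ x, op x r = c) (n : ℕ) (z : C X n) :
    rightMul op n r z = augmentation X n z • Finsupp.single (fun _ => c) 1 := by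
  suffices rightMul op n r =
      (augmentation X n).smulRight (Finsupp.single (fun _ => c) 1) from
    LinearMap.congr_fun this z
  ext x : 2
  simp [rightMul, augmentation, hr]

theorem range_rackBoundary_zero (hr : ∀ x, op x r = c) :
    LinearMap.range (rackBoundary op 0) = LinearMap.ker (augmentation X 0) := by
  refine le_antisymm (LinearMap.range_le_ker_iff.2 (augmentation_comp_rackBoundary op 0)) ?_
  intro z hz
  have homotopy : rackBoundary op 0 (snocChain 0 r z) = rightMul op 0 r z - z :=
    rackBoundary_zero_snocChain op r z
  rw [rightMul_apply_of_right_fixed hr, LinearMap.mem_ker.1 hz, zero_smul, zero_sub] at homotopy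
  exact ⟨-snocChain 0 r z, by rw [map_neg, homotopy, neg_neg]⟩

theorem range_rackBoundary_succ (sd : ∀ a b c : X, op (op a b) c = op (op a c) (op b c))
    (hr : ∀ x, op x r = c) (n : ℕ) :
    LinearMap.range (rackBoundary op (n + 1)) =
      LinearMap.ker (rackBoundary op n) ⊓ LinearMap.ker (augmentation X (n + 1)) := by
  refine le_antisymm (le_inf (LinearMap.range_le_ker_iff.2 (rackBoundary_comp_rackBoundary n sd))
    (LinearMap.range_le_ker_iff.2 (augmentation_comp_rackBoundary op (n + 1)))) ?_
  rintro z ⟨hz, haug⟩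
  have homotopy : rackBoundary op (n + 1) (snocChain (n + 1) r z) =
      snocChain n r (rackBoundary op n z) + (-1 : ℤ) ^ n • (z - rightMul op (n + 1) r z) :=
    rackBoundary_succ_snocChain op n r z
  rw [rightMul_apply_of_right_fixed hr, LinearMap.mem_ker.1 hz, LinearMap.mem_ker.1 haug,
    map_zero, zero_smul, sub_zero, zero_add] at homotopy
  refine ⟨(-1 : ℤ) ^ n • snocChain (n + 1) r z, ?_⟩
  rw [map_smul, homotopy, smul_smul, ← mul_pow, neg_one_mul, neg_neg, one_pow, one_smul]

end RightFixed

/-- If a shelf `(X,*)` has a right fixed element (`x*r = c` for all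
`x`), then its two-term (rack) homology is `ℤ` in every dimension: `im ∂_{n+1} ⊆
ker ∂_n` for all `n`, `H_0 = C_0 / im ∂_1 ≅ ℤ` (since `∂_0 = 0`), and for `n ≥ 1`,
`H_n = ker ∂_n / im ∂_{n+1} ≅ ℤ`. -/
theorem rack_homology_of_right_fixed (op : X → X → X)
    (sd : ∀ a b c : X, op (op a b) c = op (op a c) (op b c))
    (r c : X) (hr : ∀ x : X, op x r = c) :
    Nonempty ((C X 0 ⧸ LinearMap.range (rackBoundary op 0)) ≃ₗ[ℤ] ℤ) ∧
    (∀ n : ℕ,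
      LinearMap.range (rackBoundary op (n + 1)) ≤ LinearMap.ker (rackBoundary op n) ∧
      Nonempty
        ((LinearMap.ker (rackBoundary op n) ⧸
            Submodule.comap (LinearMap.ker (rackBoundary op n)).subtype
              (LinearMap.range (rackBoundary op (n + 1)))) ≃ₗ[ℤ] ℤ)) := by
  refine ⟨?_, fun n => ⟨?_, ?_⟩⟩
  · have haug : Function.Surjective (augmentation X 0) := fun a =>
      ⟨Finsupp.single (fun _ => c) a, augmentation_single 0 _ a⟩
    rw [range_rackBoundary_zero hr]
    exact ⟨(augmentation X 0).quotKerEquivOfSurjective haug⟩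
  · exact LinearMap.range_le_ker_iff.2 (rackBoundary_comp_rackBoundary n sd)
  · have hc : op c c = c := op_self_of_right_fixed sd hr
    refine nonempty_quotient_comap_subtype_equiv (range_rackBoundary_succ sd hr n) fun a =>
      ⟨a • ⟨Finsupp.single (fun _ => c) 1, rackBoundary_single_const n hc⟩, ?_⟩
    simp [augmentation_single]

end RackHomology
end
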